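/- arXiv:2211.04545 — 5 statements merged into one kernel-verified Lean document; each statement's English description precedes it below -/
import Mathlib

section
/- Let n = d·e with d, e ≥ 1, and let τ ∈ S_n be a permutation of Fin n all of whose orbits on Fin n have exactly d elements (i.e., every point of Fin n has minimal period exactly d under τ). Then n times the number of cyclic orders x ∈ CO_n with τ • x = x equals e!·d^e·φ(d), where φ is Euler's totient function. -/
/-- The set of cyclic orders on `Fin n`: the left cosets of the cyclic subgroup
generated by the natural `n`-cycle `i ↦ i + 1` in the symmetric group. -/
abbrev CO (n : ℕ) := Equiv.Perm (Fin n) ⧸ Subgroup.zpowers (finRotate n)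

/-!
A coset `gH` is fixed by `t` exactly when `g⁻¹ t g ∈ H`. Sorting such `g` by the value of
`g⁻¹ t g` gives `|H| · |Fix t| = |H ∩ cl(t)| · |C(t)|`. A permutation with `e` orbits, all having
`d` elements, is determined up to conjugacy by `d` and `e`, and its centralizer has `e! · d ^ e`
elements. If `H` is generated by a full cycle, it acts freely, so all orbits of `h ∈ H` have
`orderOf h` elements; hence `H ∩ cl(τ)` consists of the `φ(d)` elements of order `d` of the cyclic
group `H`.
-/

open Function Equiv

section FixedCosets

variable {G : Type*} [Group G] (H : Subgroup G) (t : G)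

theorem smul_mk_eq_mk_iff (g : G) : t • (g : G ⧸ H) = g ↔ g⁻¹ * t * g ∈ H := by
  rw [MulAction.Quotient.smul_coe, eq_comm, QuotientGroup.eq, smul_eq_mul, mul_assoc]

theorem natCard_mul_natCard_fixed_cosets :
    Nat.card H * Nat.card {x : G ⧸ H // t • x = x} = Nat.card {g : G // g⁻¹ * t * g ∈ H} := by
  rw [← Nat.card_prod]
  exact Nat.card_congr
    ((QuotientGroup.preimageMkEquivSubgroupProdSet H {x | t • x = x}).symm.trans
      (Equiv.subtypeEquivRight fun g => smul_mk_eq_mk_iff H t g))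

variable {t}

/-- The conjugators from `t` to a conjugate `h` form a coset of the centralizer of `t`, here
identified with the centralizer itself. -/
noncomputable def conjugatorEquivCentralizer {h : G} (hth : IsConj t h) :
    {g : G // g⁻¹ * t * g = h} ≃ Subgroup.centralizer {t} :=
  have exists_conj := isConj_iff.1 hth
  (Equiv.mulRight exists_conj.choose).subtypeEquiv fun g => by
    generalize exists_conj.choose = a, exists_conj.choose_spec = ha
    subst ha
    rw [Subgroup.mem_centralizer_singleton_iff, coe_mulRight]
    constructor <;> intro hg
    · calc g * a * t = g * (a * t * a⁻¹) * a := by group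
        _ = t * (g * a) := by rw [← hg]; group
    · calc g⁻¹ * t * g = g⁻¹ * (t * (g * a)) * a⁻¹ := by group
        _ = a * t * a⁻¹ := by rw [← hg]; group

variable (t)

theorem natCard_inv_mul_mul_mem :
    Nat.card {g : G // g⁻¹ * t * g ∈ H} =
      Nat.card {h : H // IsConj t h} * Nat.card (Subgroup.centralizer {t}) := by
  have isConj_conjugate (g : G) : IsConj t (g⁻¹ * t * g) :=
    isConj_iff.2 ⟨g⁻¹, by rw [inv_inv]⟩
  let fibration := Equiv.sigmaSubtypeFiberEquivSubtype (fun g : G => g⁻¹ * t * g)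
    (p := fun g => g⁻¹ * t * g ∈ H) (q := fun h => h ∈ H ∧ IsConj t h)
    fun g => (and_iff_left (isConj_conjugate g)).symm
  rw [Nat.card_congr (Equiv.subtypeSubtypeEquivSubtypeInter (· ∈ H) (IsConj t)), ← Nat.card_prod]
  exact Nat.card_congr (fibration.symm.trans
    (Equiv.sigmaEquivProdOfEquiv fun h => conjugatorEquivCentralizer h.2.2))

theorem natCard_mul_natCard_fixed_cosets_eq_mul_centralizer :
    Nat.card H * Nat.card {x : G ⧸ H // t • x = x} =
      Nat.card {h : H // IsConj t h} * Nat.card (Subgroup.centralizer {t}) :=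
  (natCard_mul_natCard_fixed_cosets H t).trans (natCard_inv_mul_mul_mem H t)

end FixedCosets

section MinimalPeriod

variable {α : Type*} {σ τ : Perm α} {d : ℕ}

theorem perm_pow_apply_eq_self_iff {x : α} {k : ℕ} :
    (σ ^ k) x = x ↔ minimalPeriod σ x ∣ k := by
  rw [← isPeriodicPt_iff_minimalPeriod_dvd, IsPeriodicPt, IsFixedPt, Perm.iterate_eq_pow]

theorem minimalPeriod_eq_orderOf_iff {G : Type*} [Monoid G] {g : G} {x : α} :
    minimalPeriod σ x = orderOf g ↔ ∀ k : ℕ, (σ ^ k) x = x ↔ g ^ k = 1 := by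
  simp only [perm_pow_apply_eq_self_iff, ← orderOf_dvd_iff_pow_eq_one, Nat.dvd_right_iff_eq]

theorem orderOf_eq_of_forall_minimalPeriod_eq [Nonempty α]
    (hσ : ∀ x, minimalPeriod σ x = d) : orderOf σ = d := by
  obtain ⟨x⟩ := ‹Nonempty α›
  rw [← hσ x, eq_comm, minimalPeriod_eq_orderOf_iff]
  simp [Perm.ext_iff, perm_pow_apply_eq_self_iff, hσ]

theorem eq_one_of_forall_minimalPeriod_eq_one (hσ : ∀ x, minimalPeriod σ x = 1) : σ = 1 :=
  Perm.ext fun x => minimalPeriod_eq_one_iff_isFixedPt.1 (hσ x)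

section CycleType

variable [Fintype α] [DecidableEq α]

theorem orderOf_cycleOf_eq_minimalPeriod (x : α) :
    orderOf (σ.cycleOf x) = minimalPeriod σ x := by
  refine (minimalPeriod_eq_orderOf_iff.2 fun k => ?_).symm
  by_cases hx : σ x = x
  · simp [Perm.cycleOf_eq_one_iff σ |>.2 hx, Perm.pow_apply_eq_self_of_apply_eq_self hx]
  · rw [(Perm.isCycle_cycleOf σ hx).pow_eq_one_iff' (by rwa [Perm.cycleOf_apply_self]),
      Perm.cycleOf_pow_apply_self]

theorem exists_minimalPeriod_eq_of_mem_cycleType {l : ℕ} (hl : l ∈ σ.cycleType) :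
    ∃ x, minimalPeriod σ x = l := by
  rw [Perm.cycleType_def, Multiset.mem_map] at hl
  obtain ⟨c, hc, rfl⟩ := hl
  have c_isCycle := (Perm.mem_cycleFactorsFinset_iff.1 hc).1
  obtain ⟨x, hx⟩ := c_isCycle.nonempty_support
  refine ⟨x, ?_⟩
  rw [← orderOf_cycleOf_eq_minimalPeriod, ← Perm.cycle_is_cycleOf hx hc, c_isCycle.orderOf,
    comp_apply]

theorem cycleType_eq_replicate_of_forall_minimalPeriod_eq (hd : d ≠ 1)
    (hσ : ∀ x, minimalPeriod σ x = d) :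
    σ.cycleType = Multiset.replicate (Fintype.card α / d) d := by
  have mem_eq : ∀ l ∈ σ.cycleType, l = d := fun l hl => by
    obtain ⟨x, rfl⟩ := exists_minimalPeriod_eq_of_mem_cycleType hl
    exact hσ x
  have support_eq : σ.support = Finset.univ := Finset.eq_univ_of_forall fun x => by
    rw [Perm.mem_support, Ne, ← IsFixedPt, ← minimalPeriod_eq_one_iff_isFixedPt, hσ]
    exact hd
  refine Multiset.eq_replicate.2 ⟨?_, mem_eq⟩
  have card_mul : σ.cycleType.card * d = Fintype.card α := by
    rw [← Finset.card_univ, ← support_eq, ← Perm.sum_cycleType, ← smul_eq_mul,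
      ← Multiset.sum_replicate, ← Multiset.eq_replicate_card.2 mem_eq]
  obtain rfl | hd_pos := d.eq_zero_or_pos
  · rw [Nat.div_zero, Multiset.card_eq_zero, Multiset.eq_zero_iff_forall_notMem]
    intro l hl
    exact absurd (mem_eq l hl) (zero_lt_two.trans_le (Perm.two_le_of_mem_cycleType hl)).ne'
  · exact Nat.eq_div_of_mul_eq_left hd_pos.ne' card_mul

end CycleType

variable [Finite α]

theorem isConj_of_forall_minimalPeriod_eq (hσ : ∀ x, minimalPeriod σ x = d)
    (hτ : ∀ x, minimalPeriod τ x = d) : IsConj σ τ := by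
  classical
  cases nonempty_fintype α
  obtain rfl | hd := eq_or_ne d 1
  · rw [eq_one_of_forall_minimalPeriod_eq_one hσ, eq_one_of_forall_minimalPeriod_eq_one hτ]
  · rw [Perm.isConj_iff_cycleType_eq, cycleType_eq_replicate_of_forall_minimalPeriod_eq hd hσ,
      cycleType_eq_replicate_of_forall_minimalPeriod_eq hd hτ]

theorem natCard_centralizer_of_forall_minimalPeriod_eq {e : ℕ} (hd : 0 < d)
    (hde : d * e = Nat.card α) (hσ : ∀ x, minimalPeriod σ x = d) :
    Nat.card (Subgroup.centralizer {σ}) = e.factorial * d ^ e := by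
  classical
  cases nonempty_fintype α
  rw [Nat.card_eq_fintype_card] at hde
  rw [Perm.nat_card_centralizer]
  obtain rfl | hd1 := eq_or_ne d 1
  · simp [eq_one_of_forall_minimalPeriod_eq_one hσ, ← hde]
  · rw [cycleType_eq_replicate_of_forall_minimalPeriod_eq hd1 hσ, ← hde,
      Nat.mul_div_cancel_left e hd]
    obtain rfl | he := eq_or_ne e 0
    · simp
    · simp [Multiset.toFinset_replicate, he, mul_comm]

end MinimalPeriod

section FullCycle

variable {α : Type*} {c : Perm α}

theorem eq_one_of_commute_isCycleOn_univ (hc : c.IsCycleOn Set.univ) {g : Perm α}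
    (hgc : Commute g c) {x : α} (hx : g x = x) : g = 1 := by
  ext y
  obtain ⟨i, rfl⟩ := hc.2 (Set.mem_univ x) (Set.mem_univ y)
  rw [← Perm.mul_apply, (hgc.zpow_right i).eq, Perm.mul_apply, hx, Perm.one_apply]

theorem minimalPeriod_eq_orderOf_of_mem_zpowers (hc : c.IsCycleOn Set.univ) {h : Perm α}
    (hh : h ∈ Subgroup.zpowers c) (x : α) : minimalPeriod h x = orderOf h := by
  obtain ⟨i, rfl⟩ := hh
  refine minimalPeriod_eq_orderOf_iff.2 fun k => ⟨fun hx => ?_, fun hk => by rw [hk]; rfl⟩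
  exact eq_one_of_commute_isCycleOn_univ hc (((Commute.refl c).zpow_left i).pow_left k) hx

variable [Finite α] [Nonempty α]

theorem natCard_zpowers_of_isCycleOn_univ (hc : c.IsCycleOn Set.univ) :
    Nat.card (Subgroup.zpowers c) = Nat.card α := by
  cases nonempty_fintype α
  obtain ⟨x⟩ := ‹Nonempty α›
  rw [Nat.card_zpowers, Nat.card_eq_fintype_card,
    ← minimalPeriod_eq_orderOf_of_mem_zpowers hc (Subgroup.mem_zpowers c) x,
    ← Nat.dvd_right_iff_eq]
  intro k
  rw [← perm_pow_apply_eq_self_iff, ← Finset.card_univ]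
  exact (by simpa using hc : c.IsCycleOn (Finset.univ : Finset α)).pow_apply_eq
    (Finset.mem_univ x)

theorem isConj_iff_orderOf_eq_of_mem_zpowers (hc : c.IsCycleOn Set.univ) {h τ : Perm α} {d : ℕ}
    (hh : h ∈ Subgroup.zpowers c) (hτ : ∀ x, minimalPeriod τ x = d) :
    IsConj τ h ↔ orderOf h = d := by
  constructor
  · intro hτh
    obtain ⟨a, rfl⟩ := isConj_iff.1 hτh
    rw [← MulAut.conj_apply, MulEquiv.orderOf_eq, orderOf_eq_of_forall_minimalPeriod_eq hτ]
  · rintro rfl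
    exact isConj_of_forall_minimalPeriod_eq hτ (minimalPeriod_eq_orderOf_of_mem_zpowers hc hh)

theorem natCard_isConj_zpowers_eq_totient (hc : c.IsCycleOn Set.univ) {τ : Perm α} {d : ℕ}
    (hd : d ∣ Nat.card α) (hτ : ∀ x, minimalPeriod τ x = d) :
    Nat.card {h : Subgroup.zpowers c // IsConj τ h} = d.totient := by
  classical
  have := Fintype.ofFinite (Subgroup.zpowers c)
  rw [← natCard_zpowers_of_isCycleOn_univ hc, Nat.card_eq_fintype_card] at hd
  simp only [isConj_iff_orderOf_eq_of_mem_zpowers hc (SetLike.coe_mem _) hτ, Subgroup.orderOf_coe]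
  rw [Nat.card_eq_fintype_card, Fintype.card_subtype, IsCyclic.card_orderOf_eq_totient hd]

theorem stmt_0_general (hc : c.IsCycleOn Set.univ) {τ : Perm α} {d e : ℕ}
    (hde : d * e = Nat.card α) (hτ : ∀ x, minimalPeriod τ x = d) :
    Nat.card α * Nat.card {x : Perm α ⧸ Subgroup.zpowers c // τ • x = x} =
      e.factorial * d ^ e * d.totient := by
  have hd : 0 < d := Nat.pos_of_mul_pos_right (hde ▸ Nat.card_pos)
  rw [← natCard_zpowers_of_isCycleOn_univ hc,
    natCard_mul_natCard_fixed_cosets_eq_mul_centralizer,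
    natCard_isConj_zpowers_eq_totient hc (Dvd.intro e hde) hτ,
    natCard_centralizer_of_forall_minimalPeriod_eq hd hde hτ, mul_comm]

end FullCycle

theorem isCycleOn_finRotate_univ (n : ℕ) : (finRotate n).IsCycleOn Set.univ := by
  obtain hn | hn := Nat.lt_or_ge n 2
  · have : Subsingleton (Fin n) := Fin.subsingleton_iff_le_one.2 (by omega)
    exact Perm.isCycleOn_of_subsingleton _ _
  · have hsupp : {i | finRotate n i ≠ i} = Set.univ := by
      rw [← Perm.coe_support_eq_set_support, support_finRotate_of_le hn, Finset.coe_univ]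
    exact hsupp ▸ (isCycle_finRotate_of_le hn).isCycleOn

theorem stmt_0 (d e n : ℕ) (hd : 1 ≤ d) (he : 1 ≤ e) (hn : n = d * e)
    (τ : Equiv.Perm (Fin n))
    (hτ : ∀ i : Fin n, Function.minimalPeriod (⇑τ) i = d) :
    n * Nat.card {x : CO n // τ • x = x} = e.factorial * d ^ e * Nat.totient d := by
  have : Nonempty (Fin n) := ⟨⟨0, hn ▸ Nat.mul_pos hd he⟩⟩
  simpa using stmt_0_general (isCycleOn_finRotate_univ n) (by simp [hn]) hτ
end

section
/- Let p be a prime number and let τ ∈ S_p act on CO_p. Then the number of cyclic orders x ∈ CO_p with τ • x = x equals (p−1)! if τ is the identity, equals p−1 if τ is a p-cycle, and equals 0 otherwise. -/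
/-!
A coset `g H` is fixed by `τ` exactly when `g⁻¹ τ g ∈ H`. Counting such `g` in two ways, along the
fibres of `g ↦ g H` and along those of `g ↦ g⁻¹ τ g`, gives
`|Fix τ| * |H| = |H ∩ cl τ| * |C(τ)|`. If `H` is generated by an `n`-cycle `c` of `S_n` and `τ` is
an `n`-cycle, then `|C(τ)| = |H| = n`, and the conjugates of `τ` in `H` are the `φ n` generators
of `H`. If `n` is prime, every nontrivial element of `H` generates it, so only the identity and
the conjugates of `c` can have fixed points.
-/

open Equiv MulAction Subgroup

section Group

variable {G : Type*} [Group G]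

theorem natCard_smul_mem {X : Type*} [MulAction G X] (x : X) (T : Set X) :
    Nat.card {g : G // g • x ∈ T} =
      Nat.card {y // y ∈ orbit G x ∧ y ∈ T} * Nat.card (stabilizer G x) := by
  let cosets : Set (G ⧸ stabilizer G x) := {q | ofQuotientStabilizer G x q ∈ T}
  have cosetEquiv : cosets ≃ {y // y ∈ orbit G x ∧ y ∈ T} :=
    ((orbitEquivQuotientStabilizer G x).symm.subtypeEquiv fun _ => Iff.rfl).trans
      (subtypeSubtypeEquivSubtypeInter (· ∈ orbit G x) (· ∈ T))
  calc Nat.card {g : G // g • x ∈ T}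
      = Nat.card (stabilizer G x × cosets) :=
        Nat.card_congr (QuotientGroup.preimageMkEquivSubgroupProdSet _ cosets)
    _ = _ := by rw [Nat.card_prod, Nat.card_congr cosetEquiv, mul_comm]

theorem natCard_conj_mem (τ : G) (S : Set G) :
    Nat.card {g : G // g⁻¹ * τ * g ∈ S} =
      Nat.card {h : S // IsConj τ h} * Nat.card (centralizer {τ}) := by
  have conjActEquiv : {g : G // g⁻¹ * τ * g ∈ S} ≃ {g : ConjAct G // g • τ ∈ S} :=
    ((Equiv.inv G).trans ConjAct.toConjAct.toEquiv).subtypeEquiv fun g => by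
      simp [ConjAct.smul_def]
  have classEquiv : {y // y ∈ orbit (ConjAct G) τ ∧ y ∈ S} ≃ {h : S // IsConj τ h} :=
    (subtypeEquivRight fun y => by
      rw [ConjAct.mem_orbit_conjAct, isConj_comm, and_comm]).trans
      (subtypeSubtypeEquivSubtypeInter (· ∈ S) (IsConj τ)).symm
  rw [Nat.card_congr conjActEquiv, ← Nat.card_congr classEquiv,
    nat_card_centralizer_nat_card_stabilizer]
  exact natCard_smul_mem τ S

theorem mk_mem_fixedBy_iff {H : Subgroup G} {τ g : G} :
    (g : G ⧸ H) ∈ fixedBy (G ⧸ H) τ ↔ g⁻¹ * τ * g ∈ H := by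
  rw [mem_fixedBy, eq_comm, Quotient.smul_coe, QuotientGroup.eq, smul_eq_mul, mul_assoc]

theorem natCard_fixedBy_quotient_mul_natCard (τ : G) (H : Subgroup G) :
    Nat.card (fixedBy (G ⧸ H) τ) * Nat.card H =
      Nat.card {h : H // IsConj τ h} * Nat.card (centralizer {τ}) := by
  rw [mul_comm, ← Nat.card_prod,
    ← Nat.card_congr (QuotientGroup.preimageMkEquivSubgroupProdSet H _)]
  exact (Nat.card_congr (subtypeEquivRight fun _ => mk_mem_fixedBy_iff)).trans
    (natCard_conj_mem τ (H : Set G))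

theorem exists_isConj_of_mem_fixedBy_quotient {H : Subgroup G} {τ : G} {x : G ⧸ H}
    (hx : x ∈ fixedBy (G ⧸ H) τ) : ∃ h ∈ H, IsConj τ h := by
  obtain ⟨g, rfl⟩ := QuotientGroup.mk_surjective x
  exact ⟨g⁻¹ * τ * g, mk_mem_fixedBy_iff.1 hx, isConj_iff.2 ⟨g⁻¹, by rw [inv_inv]⟩⟩

theorem natCard_zpowers_orderOf_eq {c : G} (hc : IsOfFinOrder c) :
    Nat.card {h : zpowers c // orderOf h = orderOf c} = (orderOf c).totient := by
  classical
  have : Finite (zpowers c) := finite_zpowers.2 hc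
  let _ : Fintype (zpowers c) := Fintype.ofFinite _
  rw [Nat.card_eq_fintype_card, Fintype.card_subtype]
  refine IsCyclic.card_orderOf_eq_totient (dvd_of_eq ?_)
  rw [← Nat.card_eq_fintype_card, Nat.card_zpowers]

end Group

section Perm

variable {α : Type*} {c h τ : Perm α}

theorem isConj_iff_orderOf_eq_of_mem_zpowers_s2 [Finite α] (hc : c.IsCycle) (hh : h ∈ zpowers c) :
    IsConj c h ↔ orderOf h = orderOf c := by
  classical
  let _ := Fintype.ofFinite α
  refine ⟨fun ⟨g, hg⟩ => (SemiconjBy.orderOf_eq _ hg).symm, fun horder => ?_⟩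
  obtain ⟨k, rfl⟩ := mem_powers_iff_mem_zpowers.2 hh
  rw [orderOf_pow, Nat.div_eq_self, or_iff_right (orderOf_pos c).ne'] at horder
  have hk : Nat.Coprime k (orderOf c) := Nat.Coprime.symm horder
  have hcycle : (c ^ k).IsCycle := hc.pow_iff.2 hk
  exact hc.isConj hcycle (by rw [← hc.orderOf, ← hcycle.orderOf, hk.symm.orderOf_pow])

theorem natCard_zpowers_isConj [Finite α] (hc : c.IsCycle) (hτ : IsConj τ c) :
    Nat.card {h : zpowers c // IsConj τ h} = (orderOf c).totient := by
  rw [← natCard_zpowers_orderOf_eq (isOfFinOrder_of_finite c)]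
  refine Nat.card_congr (subtypeEquivRight fun h => ?_)
  rw [← orderOf_coe h, ← isConj_iff_orderOf_eq_of_mem_zpowers_s2 hc h.2]
  exact ⟨hτ.symm.trans, hτ.trans⟩

theorem eq_one_or_isConj_of_mem_fixedBy_quotient_zpowers [Finite α] (hc : c.IsCycle)
    (hprime : (orderOf c).Prime) {x : Perm α ⧸ zpowers c}
    (hx : x ∈ fixedBy (Perm α ⧸ zpowers c) τ) : τ = 1 ∨ IsConj τ c := by
  obtain ⟨h, hmem, hconj⟩ := exists_isConj_of_mem_fixedBy_quotient hx
  rcases (Nat.dvd_prime hprime).1 (orderOf_dvd_of_mem_zpowers hmem) with horder | horder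
  · rw [orderOf_eq_one_iff.1 horder] at hconj
    exact .inl (isConj_one_left.1 hconj)
  · exact .inr (hconj.trans ((isConj_iff_orderOf_eq_of_mem_zpowers_s2 hc hmem).2 horder).symm)

variable [Fintype α] [DecidableEq α]

theorem isConj_iff_isCycle_and_card_support (hc : c.IsCycle) :
    IsConj τ c ↔ τ.IsCycle ∧ τ.support.card = c.support.card := by
  refine ⟨fun hτ => ?_, fun ⟨hcycle, hcard⟩ => hcycle.isConj hc hcard⟩
  obtain ⟨g, rfl⟩ := isConj_iff.1 hτ.symm
  exact ⟨hc.conj, Perm.card_support_conj⟩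

theorem orderOf_eq_card_of_support_eq_univ (hc : c.IsCycle) (hsupp : c.support = Finset.univ) :
    orderOf c = Fintype.card α := by
  rw [hc.orderOf, hsupp, Finset.card_univ]

theorem natCard_centralizer_of_support_eq_univ (hc : c.IsCycle)
    (hsupp : c.support = Finset.univ) : Nat.card (centralizer {c}) = Fintype.card α := by
  rw [Perm.nat_card_centralizer, hc.cycleType, hsupp]
  simp

theorem natCard_quotient_zpowers_of_support_eq_univ (hc : c.IsCycle)
    (hsupp : c.support = Finset.univ) :
    Nat.card (Perm α ⧸ zpowers c) = (Fintype.card α - 1).factorial := by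
  have hpos : 0 < Fintype.card α := orderOf_eq_card_of_support_eq_univ hc hsupp ▸ orderOf_pos c
  refine Nat.eq_of_mul_eq_mul_right hpos ?_
  calc Nat.card (Perm α ⧸ zpowers c) * Fintype.card α
      = Nat.card (Perm α ⧸ zpowers c) * Nat.card (zpowers c) := by
        rw [Nat.card_zpowers, orderOf_eq_card_of_support_eq_univ hc hsupp]
    _ = Nat.card (Perm α) := (card_eq_card_quotient_mul_card_subgroup _).symm
    _ = (Fintype.card α).factorial := by rw [Nat.card_perm, Nat.card_eq_fintype_card]
    _ = (Fintype.card α - 1).factorial * Fintype.card α := by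
        rw [mul_comm, Nat.mul_factorial_pred hpos.ne']

theorem natCard_fixedBy_quotient_zpowers_of_isConj (hc : c.IsCycle)
    (hsupp : c.support = Finset.univ) (hτ : IsConj τ c) :
    Nat.card (fixedBy (Perm α ⧸ zpowers c) τ) = (Fintype.card α).totient := by
  have horder := orderOf_eq_card_of_support_eq_univ hc hsupp
  have hpos : 0 < Fintype.card α := horder ▸ orderOf_pos c
  obtain ⟨hcycle, hcard⟩ := (isConj_iff_isCycle_and_card_support hc).1 hτ
  have hτ_supp : τ.support = Finset.univ := by
    rw [← Finset.card_eq_iff_eq_univ, hcard, hsupp, Finset.card_univ]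
  have hcount := natCard_fixedBy_quotient_mul_natCard τ (zpowers c)
  rw [Nat.card_zpowers, natCard_zpowers_isConj hc hτ, horder,
    natCard_centralizer_of_support_eq_univ hcycle hτ_supp] at hcount
  exact Nat.eq_of_mul_eq_mul_right hpos hcount

end Perm

theorem stmt_2 (p : ℕ) (hp : p.Prime) (τ : Equiv.Perm (Fin p)) :
    (τ = 1 → Nat.card {x : CO p // τ • x = x} = (p - 1).factorial) ∧
    (τ.IsCycle ∧ τ.support.card = p → Nat.card {x : CO p // τ • x = x} = p - 1) ∧
    (τ ≠ 1 → ¬(τ.IsCycle ∧ τ.support.card = p) → Nat.card {x : CO p // τ • x = x} = 0) := by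
  have hc : (finRotate p).IsCycle := isCycle_finRotate_of_le hp.two_le
  have hsupp : (finRotate p).support = Finset.univ := support_finRotate_of_le hp.two_le
  have hconj : τ.IsCycle ∧ τ.support.card = p ↔ IsConj τ (finRotate p) := by
    rw [isConj_iff_isCycle_and_card_support hc, hsupp, Finset.card_fin]
  rw [hconj]
  refine ⟨?_, fun hτ => ?_, fun hτ_ne_one hτ_not_conj => ?_⟩
  · rintro rfl
    simpa using natCard_quotient_zpowers_of_support_eq_univ hc hsupp
  · have hcard := natCard_fixedBy_quotient_zpowers_of_isConj hc hsupp hτ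
    rwa [Fintype.card_fin, Nat.totient_prime hp] at hcard
  · have hprime : (orderOf (finRotate p)).Prime := by
      rwa [orderOf_eq_card_of_support_eq_univ hc hsupp, Fintype.card_fin]
    have : IsEmpty {x : CO p // τ • x = x} := ⟨fun x =>
      (eq_one_or_isConj_of_mem_fixedBy_quotient_zpowers hc hprime x.2).elim hτ_ne_one hτ_not_conj⟩
    exact Nat.card_of_isEmpty
end

section
/- Let s : CO_4 × CO_4 → ℚ be neutral. Then there exist a, b, c ∈ ℚ such that for all g, h ∈ S_4: s(gH, hH) = a if hH = gH; s(gH, hH) = b if hH = (gρ)H (i.e., hH is the reversal of gH); and s(gH, hH) = c in all other cases. -/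
/-!
By neutrality `s (gH) (hH) = s H (g⁻¹hH)`, and `s H` is constant on the orbits of `H` acting on the
cosets from the left. For `n = 4` there are six cosets. `H` fixes itself and, because reversal
inverts the rotation `c`, it fixes `ρH`. The four-element group `H` meets its conjugate by the
transposition `τ = (0 1)` trivially, so the orbit of `τH` consists of the four other cosets.
-/

open Equiv MulAction Subgroup
open scoped Nat

section InvariantFunctions

variable {G α : Type*} [Group G] {H : Subgroup G} {s : G ⧸ H → G ⧸ H → α}

theorem apply_mk_mk_of_forall_smul (hs : ∀ (σ : G) (x y : G ⧸ H), s (σ • x) (σ • y) = s x y)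
    (g h : G) : s g h = s (1 : G) (g⁻¹ * h : G) := by
  simpa only [Quotient.smul_mk, smul_eq_mul, inv_mul_cancel] using (hs g⁻¹ g h).symm

theorem apply_one_eq_of_mem_orbit (hs : ∀ (σ : G) (x y : G ⧸ H), s (σ • x) (σ • y) = s x y)
    {x y : G ⧸ H} (hx : x ∈ orbit H y) : s (1 : G) x = s (1 : G) y := by
  obtain ⟨k, rfl⟩ := hx
  have smul_one : (k : G) • ((1 : G) : G ⧸ H) = (1 : G) := by
    rw [Quotient.smul_mk, smul_eq_mul, mul_one, QuotientGroup.eq, mul_one]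
    exact inv_mem k.2
  calc s (1 : G) (k • y) = s ((k : G) • ((1 : G) : G ⧸ H)) ((k : G) • y) := by rw [smul_one]; rfl
    _ = s (1 : G) y := hs k (1 : G) y

end InvariantFunctions

theorem notMem_orbit_of_mem_fixedPoints {G X : Type*} [Group G] [MulAction G X] {x y : X}
    (hx : x ∈ fixedPoints G X) (hxy : x ≠ y) : x ∉ orbit G y :=
  fun h ↦ hxy (mem_fixedPoints'.mp hx y (mem_orbit_symm.mp h)).symm

theorem mk_mem_fixedPoints_zpowers {G : Type*} [Group G] {c g : G}
    (h : g⁻¹ * c * g ∈ zpowers c) :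
    (g : G ⧸ zpowers c) ∈ fixedPoints (zpowers c) (G ⧸ zpowers c) := by
  have c_mem_stabilizer : c ∈ stabilizer G (g : G ⧸ zpowers c) := by
    rw [mem_stabilizer_iff, Quotient.smul_mk, eq_comm, QuotientGroup.eq, smul_eq_mul, ← mul_assoc]
    exact h
  exact fun k ↦ zpowers_le.mpr c_mem_stabilizer k.2

theorem commute_of_mem_zpowers {G : Type*} [Group G] {c k : G} (hk : k ∈ zpowers c) :
    Commute c k := by
  obtain ⟨i, rfl⟩ := hk
  exact Commute.self_zpow c i

theorem revPerm_inv_mul_finRotate_mul_revPerm (n : ℕ) :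
    Fin.revPerm⁻¹ * finRotate n * Fin.revPerm = (finRotate n)⁻¹ := by
  ext i : 1
  have := i.neZero
  simp [Fin.rev_add, Perm.inv_def]

theorem card_zpowers_finRotate (n : ℕ) : Nat.card (zpowers (finRotate (n + 1))) = n + 1 := by
  cases n with
  | zero => simp [finRotate_one, ← Perm.one_def]
  | succ n =>
    rw [Nat.card_zpowers, isCycle_finRotate.orderOf, support_finRotate, Finset.card_univ,
      Fintype.card_fin]

namespace CO

theorem card_eq_factorial (n : ℕ) : Nat.card (CO (n + 1)) = n ! := by
  have lagrange := card_eq_card_quotient_mul_card_subgroup (zpowers (finRotate (n + 1)))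
  rw [Nat.card_perm, Nat.card_fin, card_zpowers_finRotate, Nat.factorial_succ, mul_comm] at lagrange
  exact (Nat.eq_of_mul_eq_mul_right n.succ_pos lagrange).symm

theorem mk_one_mem_fixedPoints (n : ℕ) :
    ((1 : Perm (Fin n)) : CO n) ∈ fixedPoints (zpowers (finRotate n)) (CO n) :=
  mk_mem_fixedPoints_zpowers (by simp)

theorem mk_revPerm_mem_fixedPoints (n : ℕ) :
    ((Fin.revPerm : Perm (Fin n)) : CO n) ∈ fixedPoints (zpowers (finRotate n)) (CO n) := by
  apply mk_mem_fixedPoints_zpowers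
  rw [revPerm_inv_mul_finRotate_mul_revPerm]
  exact inv_mem (mem_zpowers _)

-- Commutation is used since `decide` can evaluate it; membership in `zpowers` is only classically
-- decidable.
theorem mk_ne_mk_of_finRotate_mul_ne {n : ℕ} {g h : Perm (Fin n)}
    (hgh : finRotate n * (g⁻¹ * h) ≠ g⁻¹ * h * finRotate n) : (g : CO n) ≠ h :=
  fun mk_eq ↦ hgh (commute_of_mem_zpowers (QuotientGroup.eq.mp mk_eq))

theorem stabilizer_mk_swap_eq_bot :
    stabilizer (zpowers (finRotate 4)) ((swap 0 1 : Perm (Fin 4)) : CO 4) = ⊥ := by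
  have eq_one_of_commute : ∀ k : Perm (Fin 4), finRotate 4 * k = k * finRotate 4 →
      finRotate 4 * ((swap 0 1)⁻¹ * (k * swap 0 1)) = (swap 0 1)⁻¹ * (k * swap 0 1) * finRotate 4 →
      k = 1 := by decide
  refine (eq_bot_iff_forall _).mpr fun k hk ↦ Subtype.ext ?_
  have conj_mem : (swap 0 1)⁻¹ * ((k : Perm (Fin 4)) * swap 0 1) ∈ zpowers (finRotate 4) :=
    QuotientGroup.eq.mp (mem_stabilizer_iff.mp hk).symm
  exact eq_one_of_commute k (commute_of_mem_zpowers k.2) (commute_of_mem_zpowers conj_mem)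

theorem ncard_orbit_mk_swap :
    (orbit (zpowers (finRotate 4)) ((swap 0 1 : Perm (Fin 4)) : CO 4)).ncard = 4 := by
  rw [← index_stabilizer, stabilizer_mk_swap_eq_bot, index_bot, card_zpowers_finRotate]

theorem eq_mk_one_or_eq_mk_revPerm_or_mem_orbit (x : CO 4) :
    x = (1 : Perm (Fin 4)) ∨ x = (Fin.revPerm : Perm (Fin 4)) ∨
      x ∈ orbit (zpowers (finRotate 4)) ((swap 0 1 : Perm (Fin 4)) : CO 4) := by
  set O := orbit (zpowers (finRotate 4)) ((swap 0 1 : Perm (Fin 4)) : CO 4)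
  have one_ne_rev : ((1 : Perm (Fin 4)) : CO 4) ≠ (Fin.revPerm : Perm (Fin 4)) :=
    mk_ne_mk_of_finRotate_mul_ne (by decide)
  have one_notMem : ((1 : Perm (Fin 4)) : CO 4) ∉ O :=
    notMem_orbit_of_mem_fixedPoints (mk_one_mem_fixedPoints 4)
      (mk_ne_mk_of_finRotate_mul_ne (by decide))
  have rev_notMem : ((Fin.revPerm : Perm (Fin 4)) : CO 4) ∉ O :=
    notMem_orbit_of_mem_fixedPoints (mk_revPerm_mem_fixedPoints 4)
      (mk_ne_mk_of_finRotate_mul_ne (by decide))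
  have union_eq_univ : insert ((1 : Perm (Fin 4)) : CO 4)
      (insert ((Fin.revPerm : Perm (Fin 4)) : CO 4) O) = Set.univ := by
    rw [Set.eq_univ_iff_ncard, Set.ncard_insert_of_notMem (by simp [one_ne_rev, one_notMem]),
      Set.ncard_insert_of_notMem rev_notMem, ncard_orbit_mk_swap, card_eq_factorial]
    rfl
  simpa only [← union_eq_univ, Set.mem_insert_iff] using Set.mem_univ x

end CO

theorem stmt_5_general {α : Type*} (s : CO 4 → CO 4 → α)
    (hs : ∀ (σ : Equiv.Perm (Fin 4)) (x y : CO 4), s (σ • x) (σ • y) = s x y) :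
    ∃ a b c : α, ∀ g h : Equiv.Perm (Fin 4),
      ((QuotientGroup.mk h : CO 4) = QuotientGroup.mk g →
        s (QuotientGroup.mk g) (QuotientGroup.mk h) = a) ∧
      ((QuotientGroup.mk h : CO 4) = QuotientGroup.mk (g * Fin.revPerm) →
        s (QuotientGroup.mk g) (QuotientGroup.mk h) = b) ∧
      ((QuotientGroup.mk h : CO 4) ≠ QuotientGroup.mk g →
        (QuotientGroup.mk h : CO 4) ≠ QuotientGroup.mk (g * Fin.revPerm) →
        s (QuotientGroup.mk g) (QuotientGroup.mk h) = c) := by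
  have translate {g h k : Perm (Fin 4)} (hk : ((g⁻¹ * h : Perm (Fin 4)) : CO 4) = k) :
      (h : CO 4) = (g * k : Perm (Fin 4)) := by
    simpa [Quotient.smul_mk] using congrArg (g • ·) hk
  let base : CO 4 := (1 : Perm (Fin 4))
  refine ⟨s base base, s base (Fin.revPerm : Perm (Fin 4)), s base (swap 0 1 : Perm (Fin 4)),
    fun g h ↦ ⟨fun hg ↦ ?_, fun hrev ↦ ?_, fun hg hrev ↦ ?_⟩⟩
  · rw [hg, apply_mk_mk_of_forall_smul hs, inv_mul_cancel]
  · rw [hrev, apply_mk_mk_of_forall_smul hs, inv_mul_cancel_left]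
  · rw [apply_mk_mk_of_forall_smul hs]
    rcases CO.eq_mk_one_or_eq_mk_revPerm_or_mem_orbit (g⁻¹ * h : Perm (Fin 4)) with
      h_one | h_rev | h_orbit
    · exact absurd (by simpa using translate h_one) hg
    · exact absurd (translate h_rev) hrev
    · exact apply_one_eq_of_mem_orbit hs h_orbit

theorem stmt_5 (s : CO 4 → CO 4 → ℚ)
    (hs : ∀ (σ : Equiv.Perm (Fin 4)) (x y : CO 4), s (σ • x) (σ • y) = s x y) :
    ∃ a b c : ℚ, ∀ g h : Equiv.Perm (Fin 4),
      ((QuotientGroup.mk h : CO 4) = QuotientGroup.mk g →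
        s (QuotientGroup.mk g) (QuotientGroup.mk h) = a) ∧
      ((QuotientGroup.mk h : CO 4) = QuotientGroup.mk (g * Fin.revPerm) →
        s (QuotientGroup.mk g) (QuotientGroup.mk h) = b) ∧
      ((QuotientGroup.mk h : CO 4) ≠ QuotientGroup.mk g →
        (QuotientGroup.mk h : CO 4) ≠ QuotientGroup.mk (g * Fin.revPerm) →
        s (QuotientGroup.mk g) (QuotientGroup.mk h) = c) :=
  stmt_5_general s hs
end

section
/- The diagonal action of S_4 on CO_4 × CO_4, given by σ • (x, y) = (σ • x, σ • y), has exactly 3 orbits. (Hence any neutral points-based rule on CO_4 where ballots are a single cyclic order depends on three parameters.) -/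
/-!
Every pair of cosets `(aH, bK)` can be moved to `(H, a⁻¹bK)`, and `(H, gK)`, `(H, g'K)` lie in the
same orbit exactly when `g` and `g'` lie in the same double coset, so the orbits of `G` on
`G/H × G/K` are the double cosets `H \ G / K`.

For `H = K = ⟨c⟩` with `c` the `4`-cycle in `S₄` there are three of them: the centralizer of `c`,
which is `H` itself; the set of elements conjugating `c` to `c⁻¹`; and the remaining `16`
permutations. Whether `g` conjugates `c` to a given power of `c` depends only on `HgH`, which
keeps the three classes apart.
-/

open Equiv MulAction Subgroup

section OrbitsOnPairsOfCosets

variable {G : Type*} [Group G] {H K : Subgroup G}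

theorem orbitRel_one_mk_iff_doubleCoset_mk_eq (g g' : G) :
    orbitRel G ((G ⧸ H) × (G ⧸ K)) (((1 : G) : G ⧸ H), (g : G ⧸ K)) (((1 : G) : G ⧸ H), ↑g') ↔
      DoubleCoset.mk H K g = DoubleCoset.mk H K g' := by
  have smul_eq_iff (s : G) :
      s • (((1 : G) : G ⧸ H), (g : G ⧸ K)) = (((1 : G) : G ⧸ H), (g' : G ⧸ K)) ↔
        s ∈ H ∧ (s * g)⁻¹ * g' ∈ K := by
    simp only [Prod.smul_mk, Prod.mk.injEq, MulAction.Quotient.smul_coe, smul_eq_mul,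
      QuotientGroup.eq, mul_one, inv_mem_iff]
  rw [Setoid.comm']
  simp only [orbitRel_apply, mem_orbit_iff, smul_eq_iff, DoubleCoset.eq]
  constructor
  · rintro ⟨s, hs, hk⟩
    exact ⟨s, hs, _, hk, (mul_inv_cancel_left _ _).symm⟩
  · rintro ⟨s, hs, k, hk, rfl⟩
    exact ⟨s, hs, by rwa [inv_mul_cancel_left]⟩

theorem orbitRel_mk_mk_one_mk (a b : G) :
    orbitRel G ((G ⧸ H) × (G ⧸ K)) ((a : G ⧸ H), (b : G ⧸ K))
      (((1 : G) : G ⧸ H), ((a⁻¹ * b : G) : G ⧸ K)) := by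
  refine orbitRel_apply.2 ⟨a, ?_⟩
  simp only [Prod.smul_mk, MulAction.Quotient.smul_coe, smul_eq_mul, mul_one,
    mul_inv_cancel_left]

variable (H K) in
/-- The bijection from the double cosets `H \ G / K` to the orbits of the diagonal action of `G` on
pairs of cosets, sending `HgK` to the orbit of `(H, gK)`. -/
noncomputable def doubleCosetEquivOrbits :
    DoubleCoset.Quotient (H : Set G) K ≃ orbitRel.Quotient G ((G ⧸ H) × (G ⧸ K)) :=
  Equiv.ofBijective
    (Quotient.lift (fun g ↦ Quotient.mk'' (((1 : G) : G ⧸ H), (g : G ⧸ K))) fun g g' h ↦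
      Quotient.sound ((orbitRel_one_mk_iff_doubleCoset_mk_eq g g').2 (Quotient.sound h))) <| by
    constructor
    · rintro ⟨g⟩ ⟨g'⟩ h
      exact (orbitRel_one_mk_iff_doubleCoset_mk_eq g g').1 (Quotient.exact h)
    · rintro ⟨⟨a⟩, ⟨b⟩⟩
      exact ⟨DoubleCoset.mk H K (a⁻¹ * b), (Quotient.sound (orbitRel_mk_mk_one_mk a b)).symm⟩

end OrbitsOnPairsOfCosets

section ConjugationInvariants

variable {G : Type*} [Group G] {a b g g' x y : G}

theorem semiconjBy_mul_mul_iff (ha : Commute a y) (hb : Commute b x) :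
    SemiconjBy (a * g * b) x y ↔ SemiconjBy g x y := by
  refine ⟨fun h ↦ ?_, fun h ↦ (ha.semiconjBy.mul_left h).mul_left hb⟩
  have h' := (ha.inv_left.semiconjBy.mul_left h).mul_left hb.inv_left
  rwa [mul_assoc a, inv_mul_cancel_left, mul_inv_cancel_right] at h'

theorem semiconjBy_iff_of_doubleCoset_mk_eq (hy : y ∈ zpowers x)
    (h : DoubleCoset.mk (zpowers x) (zpowers x) g = DoubleCoset.mk (zpowers x) (zpowers x) g') :
    SemiconjBy g x y ↔ SemiconjBy g' x y := by
  obtain ⟨_, ⟨m, rfl⟩, _, ⟨n, rfl⟩, rfl⟩ := (DoubleCoset.eq _ _ _ _).1 h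
  obtain ⟨k, rfl⟩ := hy
  exact (semiconjBy_mul_mul_iff (Commute.zpow_zpow_self x m k) (Commute.zpow_self x n)).symm

end ConjugationInvariants

/-- Representatives of the double cosets of `⟨finRotate 4⟩` in `S₄`. They carry the cyclic order
`(0 1 2 3)` to itself, to its reversal `(2 1 0 3)`, and to `(1 0 2 3)`, where two neighbours have
been exchanged. -/
def rotationDoubleCosetRep : Fin 3 → Perm (Fin 4) := ![1, swap 0 2, swap 0 1]

local notation "ρ" => finRotate 4

theorem exists_eq_pow_mul_rotationDoubleCosetRep_mul_pow :
    ∀ g : Perm (Fin 4), ∃ (i : Fin 3) (m n : Fin 4),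
      g = ρ ^ (m : ℕ) * rotationDoubleCosetRep i * ρ ^ (n : ℕ) := by
  decide +kernel

theorem semiconjBy_rotationDoubleCosetRep_self_iff (i : Fin 3) :
    SemiconjBy (rotationDoubleCosetRep i) ρ ρ ↔ i = 0 := by
  unfold SemiconjBy
  decide +revert

theorem semiconjBy_rotationDoubleCosetRep_inv_iff (i : Fin 3) :
    SemiconjBy (rotationDoubleCosetRep i) ρ ρ⁻¹ ↔ i = 1 := by
  unfold SemiconjBy
  decide +revert

theorem bijective_doubleCoset_mk_rotationDoubleCosetRep :
    Function.Bijective fun i ↦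
      DoubleCoset.mk (zpowers ρ) (zpowers ρ) (rotationDoubleCosetRep i) := by
  constructor
  · intro i j h
    have zero_iff : i = 0 ↔ j = 0 := by
      simpa only [semiconjBy_rotationDoubleCosetRep_self_iff] using
        semiconjBy_iff_of_doubleCoset_mk_eq (mem_zpowers ρ) h
    have one_iff : i = 1 ↔ j = 1 := by
      simpa only [semiconjBy_rotationDoubleCosetRep_inv_iff] using
        semiconjBy_iff_of_doubleCoset_mk_eq (inv_mem (mem_zpowers ρ)) h
    omega
  · rintro ⟨g⟩
    obtain ⟨i, m, n, hg⟩ := exists_eq_pow_mul_rotationDoubleCosetRep_mul_pow g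
    exact ⟨i, (DoubleCoset.eq _ _ _ _).2
      ⟨_, npow_mem_zpowers ρ m, _, npow_mem_zpowers ρ n, hg⟩⟩

theorem stmt_14 :
    Nat.card (MulAction.orbitRel.Quotient (Equiv.Perm (Fin 4)) (CO 4 × CO 4)) = 3 := by
  rw [← Nat.card_congr (doubleCosetEquivOrbits (zpowers (finRotate 4)) (zpowers (finRotate 4))),
    ← Nat.card_eq_of_bijective _ bijective_doubleCoset_mk_rotationDoubleCosetRep, Nat.card_fin]
end

section
/- Let s : CO_5 × CO_5 → ℚ be neutral. Then for every h ∈ S_5, Σ_{g ∈ S_5} sgn(g)·s(gH, hH) = sgn(h) · Σ_{g ∈ S_5} sgn(g)·s(gH, H), where sgn : S_5 → {±1} ⊆ ℚ is the sign homomorphism. (That is, the sign function, which is well-defined on CO_5 since the 5-cycle c is even, spans an eigenspace of every neutral scoring rule on CO_5.) -/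
theorem stmt_16_general {G X Y R M : Type*} [Group G] [Fintype G] [MulAction G X] [MulAction G Y]
    [Monoid R] [AddCommMonoid M] [DistribMulAction R M] (χ : G →* R) (s : X → Y → M)
    (hs : ∀ (σ : G) (x : X) (y : Y), s (σ • x) (σ • y) = s x y) (h : G) (x : X) (y : Y) :
    ∑ g : G, χ g • s (g • x) (h • y) = χ h • ∑ g : G, χ g • s (g • x) y :=
  calc ∑ g : G, χ g • s (g • x) (h • y)
      = ∑ g : G, χ (h * g) • s ((h * g) • x) (h • y) :=
        (Equiv.sum_comp (Equiv.mulLeft h) fun g ↦ χ g • s (g • x) (h • y)).symm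
    _ = ∑ g : G, χ h • χ g • s (g • x) y := by simp only [map_mul, mul_smul, hs]
    _ = χ h • ∑ g : G, χ g • s (g • x) y := Finset.smul_sum.symm

theorem stmt_16 (s : CO 5 → CO 5 → ℚ)
    (hs : ∀ (σ : Equiv.Perm (Fin 5)) (x y : CO 5), s (σ • x) (σ • y) = s x y)
    (h : Equiv.Perm (Fin 5)) :
    ∑ g : Equiv.Perm (Fin 5),
        ((Equiv.Perm.sign g : ℤ) : ℚ) * s (QuotientGroup.mk g) (QuotientGroup.mk h)
      = ((Equiv.Perm.sign h : ℤ) : ℚ) *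
        ∑ g : Equiv.Perm (Fin 5),
          ((Equiv.Perm.sign g : ℤ) : ℚ) * s (QuotientGroup.mk g) (QuotientGroup.mk 1) := by
  let sgn : Equiv.Perm (Fin 5) →* ℚ :=
    (Int.castRingHom ℚ : ℤ →* ℚ).comp ((Units.coeHom ℤ).comp Equiv.Perm.sign)
  -- `g • mk 1` is `mk (g * 1)`, and `g * 1` reduces to `g` for permutations.
  exact stmt_16_general sgn s hs h (QuotientGroup.mk 1) (QuotientGroup.mk 1)
end
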